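/- Let 𝕏 = (X, d_X, ξ) be an mm-space, let (Z, d_Z) be a compact metric space, and let (π_n)_{n ∈ ℕ} be Borel probability measures on Z × Z converging weakly to π. Then GW²(𝕏, (Z, d_Z, P_{1,#}π)) ≤ liminf_{n→∞} GW²(𝕏, (Z, d_Z, P_{1,#}π_n)), where P_{1,#} denotes the first marginal. -/

import Mathlib

/-!
The proof is the direct method. Couplings of `ξ` with the marginals `ν n` are probability measures on
the compact metric space `X × Z`, hence form a family with a weak cluster point by Prokhorov's
theorem. Pushing forward to a factor is weakly continuous, so the cluster point couples `ξ` with the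
limit marginal. The objective is the integral of a fixed continuous function against `γ ⊗ γ`, and
`γ ↦ γ ⊗ γ` is weakly continuous, so the objective is weakly continuous
(`tendsto_GWobj`) and passes to the limit. Cluster points are taken along an ultrafilter that
contains the indices at which the squared distance is small.
-/

open MeasureTheory Filter Topology

noncomputable section

/-- The set of couplings (transport plans) between two measures. -/
def couplings {X Y : Type*} [MeasurableSpace X] [MeasurableSpace Y]
    (μ : Measure X) (ν : Measure Y) : Set (Measure (X × Y)) :=
  {π | π.map Prod.fst = μ ∧ π.map Prod.snd = ν}

/-- Squared Wasserstein-2 distance. -/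
noncomputable def W2sq {Z : Type*} [MetricSpace Z] [MeasurableSpace Z]
    (μ ν : Measure Z) : ℝ :=
  ⨅ π : couplings μ ν, ∫ p : Z × Z, dist p.1 p.2 ^ 2 ∂(π.1)

/-- Wasserstein-2 distance. -/
noncomputable def W2 {Z : Type*} [MetricSpace Z] [MeasurableSpace Z]
    (μ ν : Measure Z) : ℝ := Real.sqrt (W2sq μ ν)

/-- The Gromov--Wasserstein objective of a plan `γ`. -/
noncomputable def GWobj {X Y : Type*} [MetricSpace X] [MetricSpace Y]
    [MeasurableSpace X] [MeasurableSpace Y]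
    (γ : Measure (X × Y)) : ℝ :=
  ∫ q : (X × Y) × (X × Y),
    (dist q.1.1 q.2.1 - dist q.1.2 q.2.2) ^ 2 ∂(γ.prod γ)

/-- Squared Gromov--Wasserstein distance between `(X, d_X, ξ)` and `(Y, d_Y, ν)`. -/
noncomputable def GWsq {X Y : Type*} [MetricSpace X] [MetricSpace Y]
    [MeasurableSpace X] [MeasurableSpace Y]
    (ξ : Measure X) (ν : Measure Y) : ℝ :=
  ⨅ γ : couplings ξ ν, GWobj γ.1

/-- The support of a measure: points all of whose open neighborhoods have positive measure. -/
def msupport {X : Type*} [TopologicalSpace X] [MeasurableSpace X] (ξ : Measure X) : Set X :=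
  {x | ∀ U : Set X, IsOpen U → x ∈ U → 0 < ξ U}

/-- Pushforward `I,#ξ` of `ξ` under a map defined on the support of `ξ`. -/
noncomputable def pushSupp {X Z : Type*} [MetricSpace X] [MetricSpace Z]
    [MeasurableSpace X] [MeasurableSpace Z]
    (ξ : Measure X) (I : msupport ξ → Z) : Measure Z :=
  Measure.map I (Measure.comap Subtype.val ξ)

/-- The objective of the `EW_λ` problem evaluated at a plan `π` on `Z × Z`. -/
noncomputable def EWobj {X₁ X₂ Z : Type*} [MetricSpace X₁] [MetricSpace X₂] [MetricSpace Z]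
    [MeasurableSpace X₁] [MeasurableSpace X₂] [MeasurableSpace Z]
    (lam : ℝ) (ξ₁ : Measure X₁) (ξ₂ : Measure X₂) (π : Measure (Z × Z)) : ℝ :=
  (∫ p : Z × Z, dist p.1 p.2 ^ 2 ∂π)
    + lam * (GWsq ξ₁ (π.map Prod.fst) + GWsq ξ₂ (π.map Prod.snd))

/-- `EW_λ(𝕏₁, 𝕏₂)²`: infimum of the `EW_λ` objective over probability measures on `Z × Z`. -/
noncomputable def EWlamSq {X₁ X₂ : Type*} (Z : Type*) [MetricSpace X₁] [MetricSpace X₂] [MetricSpace Z]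
    [MeasurableSpace X₁] [MeasurableSpace X₂] [MeasurableSpace Z]
    (lam : ℝ) (ξ₁ : Measure X₁) (ξ₂ : Measure X₂) : ℝ :=
  ⨅ π : {π : Measure (Z × Z) // IsProbabilityMeasure π}, EWobj lam ξ₁ ξ₂ π.1

/-- `EW(𝕏₁, 𝕏₂)²`: infimum over isometric embeddings of the supports into `Z`. -/
noncomputable def EWsq {X₁ X₂ : Type*} (Z : Type*) [MetricSpace X₁] [MetricSpace X₂] [MetricSpace Z]
    [MeasurableSpace X₁] [MeasurableSpace X₂] [MeasurableSpace Z]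
    (ξ₁ : Measure X₁) (ξ₂ : Measure X₂) : ℝ :=
  ⨅ (I₁ : {f : msupport ξ₁ → Z // Isometry f}) (I₂ : {f : msupport ξ₂ → Z // Isometry f}),
    W2sq (pushSupp ξ₁ I₁.1) (pushSupp ξ₂ I₂.1)

/-- Weak convergence of a sequence of measures. -/
def WeakConv {Z : Type*} [TopologicalSpace Z] [MeasurableSpace Z]
    (μs : ℕ → Measure Z) (μ : Measure Z) : Prop :=
  ∀ φ : Z → ℝ, Continuous φ →
    Tendsto (fun n => ∫ z, φ z ∂(μs n)) atTop (nhds (∫ z, φ z ∂μ))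

lemma continuous_GW_integrand {X Z : Type*} [MetricSpace X] [MetricSpace Z] :
    Continuous (fun q : (X × Z) × (X × Z) =>
      (dist q.1.1 q.2.1 - dist q.1.2 q.2.2) ^ 2) := by
  fun_prop

lemma GWobj_nonneg {X Z : Type*} [MetricSpace X] [MetricSpace Z]
    [MeasurableSpace X] [MeasurableSpace Z] (γ : Measure (X × Z)) : 0 ≤ GWobj γ :=
  integral_nonneg fun _ => sq_nonneg _

lemma GWsq_le_GWobj {X Z : Type*} [MetricSpace X] [MetricSpace Z]
    [MeasurableSpace X] [MeasurableSpace Z] {ξ : Measure X} {ν : Measure Z}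
    {γ : Measure (X × Z)} (hγ : γ ∈ couplings ξ ν) : GWsq ξ ν ≤ GWobj γ :=
  ciInf_le ⟨0, by rintro _ ⟨γ', rfl⟩; exact GWobj_nonneg _⟩ (⟨γ, hγ⟩ : couplings ξ ν)

lemma prod_mem_couplings {X Z : Type*} [MeasurableSpace X] [MeasurableSpace Z]
    (ξ : Measure X) (ν : Measure Z) [IsProbabilityMeasure ξ] [IsProbabilityMeasure ν] :
    ξ.prod ν ∈ couplings ξ ν := by
  constructor <;> simp

/-- The squared distance is bounded uniformly in the second measure; without this the real-valued
`liminf` could take a junk value. -/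
lemma exists_GWsq_le {X Z : Type*} [MetricSpace X] [CompactSpace X] [MetricSpace Z]
    [CompactSpace Z] [MeasurableSpace X] [MeasurableSpace Z] (ξ : Measure X)
    [IsProbabilityMeasure ξ] :
    ∃ C : ℝ, ∀ ν : Measure Z, IsProbabilityMeasure ν → GWsq ξ ν ≤ C := by
  obtain ⟨C, hC⟩ := (isCompact_range (continuous_GW_integrand (X := X) (Z := Z))).bddAbove
  refine ⟨C ⊔ 0, fun ν _ => (GWsq_le_GWobj (prod_mem_couplings ξ ν)).trans ?_⟩
  have h := norm_integral_le_of_norm_le_const (μ := (ξ.prod ν).prod (ξ.prod ν)) (C := C ⊔ 0)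
    (f := fun q : (X × Z) × (X × Z) => (dist q.1.1 q.2.1 - dist q.1.2 q.2.2) ^ 2)
    (Eventually.of_forall fun q => by
      rw [Real.norm_of_nonneg (sq_nonneg _)]
      exact (hC ⟨q, rfl⟩).trans le_sup_left)
  simpa [GWobj] using (le_abs_self _).trans h

/-- The Gromov--Wasserstein objective is weakly continuous on probability measures. -/
lemma tendsto_GWobj {ι X Z : Type*} [MetricSpace X] [CompactSpace X] [MetricSpace Z]
    [CompactSpace Z] [SecondCountableTopology X] [SecondCountableTopology Z]
    [MeasurableSpace X] [BorelSpace X] [MeasurableSpace Z] [BorelSpace Z]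
    {l : Filter ι} {γ : ι → ProbabilityMeasure (X × Z)} {γ₀ : ProbabilityMeasure (X × Z)}
    (h : Tendsto γ l (𝓝 γ₀)) :
    Tendsto (fun i => GWobj (γ i : Measure (X × Z))) l (𝓝 (GWobj (γ₀ : Measure (X × Z)))) := by
  have h2 := (ProbabilityMeasure.continuous_prod (α := X × Z) (β := X × Z)).continuousAt.tendsto.comp
    (h.prodMk_nhds h)
  rw [ProbabilityMeasure.tendsto_iff_forall_integral_tendsto] at h2
  exact h2 (BoundedContinuousFunction.mkOfCompact ⟨_, continuous_GW_integrand⟩)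

theorem stmt8 {X Z : Type*} [MetricSpace X] [CompactSpace X] [MetricSpace Z] [CompactSpace Z]
    [MeasurableSpace X] [BorelSpace X] [MeasurableSpace Z] [BorelSpace Z]
    (ξ : Measure X) [IsProbabilityMeasure ξ]
    (π : ℕ → Measure (Z × Z)) (hπ : ∀ n, IsProbabilityMeasure (π n))
    (πlim : Measure (Z × Z)) [IsProbabilityMeasure πlim]
    (h : WeakConv π πlim) :
    GWsq ξ (πlim.map Prod.fst)
      ≤ liminf (fun n => GWsq ξ ((π n).map Prod.fst)) atTop := by
  have : SecondCountableTopology X := EMetric.secondCountable_of_sigmaCompact X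
  have : SecondCountableTopology Z := EMetric.secondCountable_of_sigmaCompact Z
  have hν : ∀ n, IsProbabilityMeasure ((π n).map Prod.fst) := fun n =>
    Measure.isProbabilityMeasure_map measurable_fst.aemeasurable
  obtain ⟨C, hC⟩ := exists_GWsq_le (Z := Z) ξ
  have hcob : IsCoboundedUnder (· ≥ ·) atTop (fun n => GWsq ξ ((π n).map Prod.fst)) :=
    (isBoundedUnder_of ⟨C, fun n => hC _ (hν n)⟩).isCoboundedUnder_ge
  let P : ℕ → ProbabilityMeasure (Z × Z) := fun n => ⟨π n, hπ n⟩
  let P₀ : ProbabilityMeasure (Z × Z) := ⟨πlim, inferInstance⟩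
  have hP : Tendsto P atTop (𝓝 P₀) :=
    ProbabilityMeasure.tendsto_iff_forall_integral_tendsto.2 fun f => h f f.continuous
  refine le_of_forall_lt fun b hb => ?_
  obtain ⟨c, hbc, hc⟩ := exists_between hb
  refine hbc.trans_le (le_liminf_of_le hcob ?_)
  by_contra hfreq
  have hfreq : ∃ᶠ n in atTop, ∃ γ : ProbabilityMeasure (X × Z),
      (γ : Measure (X × Z)) ∈ couplings ξ ((π n).map Prod.fst) ∧
        GWobj (γ : Measure (X × Z)) < c := by
    refine (not_eventually.1 hfreq).mono fun n hn => ?_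
    have : Nonempty (couplings ξ ((π n).map Prod.fst)) := ⟨⟨_, prod_mem_couplings _ _⟩⟩
    obtain ⟨⟨γ, hγ⟩, hlt⟩ := exists_lt_of_ciInf_lt (not_le.1 hn)
    have : IsProbabilityMeasure γ := by
      have : IsProbabilityMeasure (γ.map Prod.fst) := by rw [hγ.1]; infer_instance
      exact ⟨by rw [← Set.preimage_univ (f := Prod.fst (α := X) (β := Z)),
        ← Measure.map_apply measurable_fst MeasurableSet.univ]; exact measure_univ⟩
    exact ⟨⟨γ, this⟩, hγ, hlt⟩
  -- Along an ultrafilter finer than `atTop` that contains `S`, every sequence in the compact space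
  -- of probability measures converges.
  let S : Set ℕ := {n | ∃ γ : ProbabilityMeasure (X × Z),
    (γ : Measure (X × Z)) ∈ couplings ξ ((π n).map Prod.fst) ∧ GWobj (γ : Measure (X × Z)) < c}
  have : NeBot (atTop ⊓ 𝓟 S) := frequently_mem_iff_neBot.1 hfreq
  let U : Ultrafilter ℕ := Ultrafilter.of (atTop ⊓ 𝓟 S)
  have hU : (U : Filter ℕ) ≤ atTop ⊓ 𝓟 S := Ultrafilter.of_le _
  have hUtop : (U : Filter ℕ) ≤ atTop := hU.trans inf_le_left
  have hUS : ∀ᶠ n in (U : Filter ℕ), n ∈ S := le_principal_iff.1 (hU.trans inf_le_right)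
  have : Nonempty (ProbabilityMeasure (X × Z)) := by
    obtain ⟨n, γ, -⟩ := hfreq.exists
    exact ⟨γ⟩
  have hsel : ∀ n, ∃ γ : ProbabilityMeasure (X × Z), n ∈ S →
      (γ : Measure (X × Z)) ∈ couplings ξ ((π n).map Prod.fst) ∧
        GWobj (γ : Measure (X × Z)) < c := by
    intro n
    by_cases hn : n ∈ S
    · obtain ⟨γ, hγ⟩ := hn
      exact ⟨γ, fun _ => hγ⟩
    · exact ⟨Classical.arbitrary _, fun h' => absurd h' hn⟩
  choose γ hγ using hsel
  obtain ⟨γ₀, -, hγ₀⟩ := isCompact_univ.ultrafilter_le_nhds (U.map γ) (by simp)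
  have hlim : Tendsto γ (U : Filter ℕ) (𝓝 γ₀) := hγ₀
  have hfst := ProbabilityMeasure.tendsto_map_of_tendsto_of_continuous _ _ hlim continuous_fst
  have hsnd := ProbabilityMeasure.tendsto_map_of_tendsto_of_continuous _ _ hlim continuous_snd
  have hP1 := ProbabilityMeasure.tendsto_map_of_tendsto_of_continuous _ _ (hP.mono_left hUtop)
    continuous_fst
  have hmem : (γ₀ : Measure (X × Z)) ∈ couplings ξ (πlim.map Prod.fst) := by
    constructor
    · let Ξ : ProbabilityMeasure X := ⟨ξ, inferInstance⟩
      have key := tendsto_nhds_unique hfst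
        ((tendsto_const_nhds (x := Ξ)).congr'
          (hUS.mono fun n hn => Subtype.ext (hγ n hn).1.1.symm))
      exact congrArg Subtype.val key
    · have key := tendsto_nhds_unique hsnd
        (hP1.congr' (hUS.mono fun n hn => Subtype.ext (hγ n hn).1.2.symm))
      exact congrArg Subtype.val key
  have hle : GWobj (γ₀ : Measure (X × Z)) ≤ c :=
    le_of_tendsto (tendsto_GWobj hlim) (hUS.mono fun n hn => (hγ n hn).2.le)
  exact absurd ((GWsq_le_GWobj hmem).trans hle) (not_le.2 hc)
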